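/- Let ρ > −1/2 and α > ρ + 1/2 be real numbers. There exists a constant C = C(α, ρ) with the following property. Let μ be a finite Borel measure on [0,∞) and let g : [0,∞) → ℂ be a bounded measurable function; for β ∈ {ρ, α} and t > 0 set s_β(t) = ∫_{[0,∞)} (1 − λ/t²)₊^β g(λ) dμ(λ), where (y)₊^β is interpreted as 0 when y ≤ 0. Then for every R > 0, |s_α(R)|² ≤ C · (1/R) ∫_0^R |s_ρ(t)|² dt. -/

import Mathlib

open MeasureTheory

/-- The Bochner–Riesz type mean of order `β` at level `t` of a bounded function `g`
against a measure `μ` on `[0,∞)`: `s_β(t) = ∫ (1 - λ/t²)₊^β g(λ) dμ(λ)`, with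
`(y)₊^β` interpreted as `0` when `y ≤ 0`. -/
noncomputable def riesMean (μ : Measure ℝ) (g : ℝ → ℂ) (β t : ℝ) : ℂ :=
  ∫ l, ((if 0 < 1 - l / t ^ 2 then (1 - l / t ^ 2) ^ β else 0 : ℝ) : ℂ) * g l ∂μ


noncomputable def rzK (β t l : ℝ) : ℝ := if 0 < 1 - l / t ^ 2 then (1 - l / t ^ 2) ^ β else 0

lemma rzK_nonneg (β t l : ℝ) : 0 ≤ rzK β t l := by
  unfold rzK; split_ifs with h
  · positivity
  · exact le_rfl

lemma rzK_le_one (β t l : ℝ) (hβ : 0 ≤ β) (hl : 0 ≤ l) : rzK β t l ≤ 1 := by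
  unfold rzK; split_ifs with h
  · refine Real.rpow_le_one h.le ?_ hβ
    have : 0 ≤ l / t ^ 2 := by positivity
    linarith
  · exact zero_le_one

lemma rzK_measurable (β : ℝ) : Measurable (fun p : ℝ × ℝ => rzK β p.1 p.2) := by
  unfold rzK
  refine Measurable.ite (measurableSet_lt measurable_const (by fun_prop)) (by fun_prop) (by fun_prop)

lemma rzK_eq (β t l : ℝ) (ht : 0 < t) (h : l < t ^ 2) :
    rzK β t l = (t ^ 2 - l) ^ β / t ^ (2 * β) := by
  have h2 : 1 - l / t ^ 2 = (t ^ 2 - l) / t ^ 2 := by field_simp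
  have h3 : 0 < (t ^ 2 - l) / t ^ 2 := div_pos (by linarith) (by positivity)
  rw [rzK, h2, if_pos h3, Real.div_rpow (by linarith) (by positivity), Real.rpow_mul ht.le]
  norm_num

lemma rzK_zero (β t l : ℝ) (ht : 0 < t) (h : t ^ 2 ≤ l) : rzK β t l = 0 := by
  rw [rzK, if_neg]
  have : 1 ≤ l / t ^ 2 := by rw [le_div_iff₀ (by positivity)]; linarith
  linarith

lemma beta_one (a b : ℝ) (ha : 0 < a) (hb : 0 < b) :
    ∫⁻ x in Set.Ioo (0:ℝ) 1, ENNReal.ofReal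
      (1 / ProbabilityTheory.beta a b * x ^ (a - 1) * (1 - x) ^ (b - 1)) = 1 := by
  rw [← ProbabilityTheory.lintegral_betaPDF, ProbabilityTheory.lintegral_betaPDF_eq_one ha hb]

lemma key (ρ α R l : ℝ) (hρ : -1 < ρ) (hα : ρ < α) (hR : 0 < R) (hl : 0 ≤ l) :
    ∫⁻ t in Set.Ioo 0 R, ENNReal.ofReal ((R^2-t^2)^(α-ρ-1) * t^(2*ρ+1) * rzK ρ t l)
      = ENNReal.ofReal (ProbabilityTheory.beta (ρ+1) (α-ρ) / 2 * R^(2*α) * rzK α R l) := by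
  by_cases hlR : R ^ 2 ≤ l
  · rw [rzK_zero α R l hR hlR, mul_zero, ENNReal.ofReal_zero]
    refine setLIntegral_eq_zero measurableSet_Ioo (fun t ht => ?_)
    have : t ^ 2 ≤ l := by nlinarith [ht.1, ht.2]
    simp [rzK_zero ρ t l ht.1 this]
  push Not at hlR
  set s := √l with hs
  have hs0 : 0 ≤ s := Real.sqrt_nonneg _
  have hss : s ^ 2 = l := Real.sq_sqrt hl
  have hsR : s < R := by nlinarith
  have hD : 0 < R ^ 2 - l := by linarith
  set B := ProbabilityTheory.beta (ρ+1) (α-ρ) with hB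
  have hBpos : 0 < B := ProbabilityTheory.beta_pos (by linarith) (by linarith)
  have hsplit : Set.Ioo 0 R = Set.Ioc 0 s ∪ Set.Ioo s R := (Set.Ioc_union_Ioo_eq_Ioo hs0 hsR).symm
  rw [hsplit, lintegral_union measurableSet_Ioo
    (Set.disjoint_left.2 fun x hx hx' => absurd hx.2 (not_le.2 hx'.1)),
    setLIntegral_eq_zero measurableSet_Ioc, zero_add]
  swap
  · intro t ht
    have : t ^ 2 ≤ l := by nlinarith [ht.1, ht.2]
    simp [rzK_zero ρ t l ht.1 this]
  have him : (fun t : ℝ => (t^2 - l) / (R^2 - l)) '' Set.Ioo s R = Set.Ioo 0 1 := by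
    ext v
    constructor
    · rintro ⟨t, ht, rfl⟩
      have h1 : l < t ^ 2 := by nlinarith [ht.1, ht.2]
      have h2 : t ^ 2 < R ^ 2 := by nlinarith [ht.1, ht.2]
      exact ⟨div_pos (by linarith) hD, by
        show (t^2 - l) / (R^2 - l) < 1
        rw [div_lt_one hD]; linarith⟩
    · rintro ⟨h0, h1⟩
      have hp : l < l + (R^2-l) * v := by nlinarith [mul_pos hD h0]
      refine ⟨√(l + (R^2-l) * v), ⟨Real.sqrt_lt_sqrt hl hp, ?_⟩, ?_⟩
      · rw [Real.sqrt_lt' hR]; nlinarith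
      · simp only
        rw [Real.sq_sqrt (by linarith)]; field_simp; ring
  have hinj : Set.InjOn (fun t : ℝ => (t^2 - l) / (R^2 - l)) (Set.Ioo s R) := by
    intro x hx y hy hxy
    simp only at hxy
    rw [div_left_inj' hD.ne'] at hxy
    have hx0 := hx.1; have hy0 := hy.1
    exact (sq_eq_sq₀ (by linarith) (by linarith)).1 (by linarith)
  have hcv := lintegral_image_eq_lintegral_abs_deriv_mul (s := Set.Ioo s R)
    (f := fun t : ℝ => (t^2 - l) / (R^2 - l)) (f' := fun t => 2 * t / (R^2 - l)) measurableSet_Ioo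
    (fun x _ => by
      have := (((hasDerivAt_pow 2 x).sub_const l).div_const (R^2-l)).hasDerivWithinAt
        (s := Set.Ioo s R)
      simpa using this) hinj
    (fun x => ENNReal.ofReal (1 / B * x ^ (ρ + 1 - 1) * (1 - x) ^ (α - ρ - 1)))
  rw [him, beta_one _ _ (by linarith) (by linarith)] at hcv
  have hc : B / 2 * R^(2*α) * rzK α R l = B / 2 * (R^2 - l) ^ α := by
    rw [rzK_eq α R l hR hlR]
    have := Real.rpow_pos_of_pos hR (2*α)
    field_simp
  rw [hc, ← mul_one (ENNReal.ofReal _), hcv, ← lintegral_const_mul' _ _ ENNReal.ofReal_ne_top]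
  refine setLIntegral_congr_fun measurableSet_Ioo (fun t ht => ?_)
  have ht0 : 0 < t := hs0.trans_lt ht.1
  have h1 : l < t ^ 2 := by nlinarith [ht.1, ht.2]
  have h2 : t ^ 2 < R ^ 2 := by nlinarith [ht.1, ht.2]
  have hD' := Real.rpow_pos_of_pos hD α
  rw [← ENNReal.ofReal_mul (abs_nonneg _), ← ENNReal.ofReal_mul (by positivity)]
  congr 1
  rw [abs_of_nonneg (by positivity), rzK_eq ρ t l ht0 h1]
  have e1 : 1 - (t^2 - l) / (R^2 - l) = (R^2 - t^2) / (R^2 - l) := by field_simp; ring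
  rw [e1, Real.div_rpow (by linarith) hD.le, Real.div_rpow (by linarith) hD.le,
    Real.rpow_add_one ht0.ne', add_sub_cancel_right]
  have e2 : (R^2 - l) ^ α = (R^2 - l) ^ ρ * (R^2 - l) ^ (α - ρ - 1) * (R^2 - l) := by
    rw [← Real.rpow_add hD, ← Real.rpow_add_one hD.ne']; congr 1; ring
  rw [e2]
  have p1 := Real.rpow_pos_of_pos hD ρ
  have p2 := Real.rpow_pos_of_pos hD (α - ρ - 1)
  have p3 := Real.rpow_pos_of_pos ht0 (2 * ρ)
  generalize (R^2 - l) ^ ρ = x at *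
  generalize (R^2 - l) ^ (α - ρ - 1) = y at *
  generalize t ^ (2 * ρ) = z at *
  generalize (R^2 - t^2) ^ (α - ρ - 1) = u at *
  generalize (t^2 - l) ^ ρ = w at *
  field_simp

lemma int_of_lint (R c : ℝ) (f : ℝ → ℝ) (hf : Measurable f) (hc : 0 ≤ c)
    (h0 : ∀ t ∈ Set.Ioo 0 R, 0 ≤ f t)
    (h : ∫⁻ t in Set.Ioo 0 R, ENNReal.ofReal (f t) = ENNReal.ofReal c) :
    Integrable f (volume.restrict (Set.Ioo 0 R)) ∧ ∫ t in Set.Ioo 0 R, f t = c := by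
  have hae : 0 ≤ᵐ[volume.restrict (Set.Ioo 0 R)] f :=
    (ae_restrict_iff' measurableSet_Ioo).2 (Filter.Eventually.of_forall h0)
  refine ⟨⟨hf.aestronglyMeasurable, ?_⟩, ?_⟩
  · rw [hasFiniteIntegral_iff_ofReal hae, h]; exact ENNReal.ofReal_lt_top
  · rw [integral_eq_lintegral_of_nonneg_ae hae hf.aestronglyMeasurable, h, ENNReal.toReal_ofReal hc]

noncomputable def rzW (ρ α R t : ℝ) : ℝ := (R^2-t^2)^(α-ρ-1) * t^(2*ρ+1)

lemma rzW_meas (ρ α R : ℝ) : Measurable (rzW ρ α R) := by unfold rzW; fun_prop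

lemma rzW_nonneg (ρ α R t : ℝ) (ht : t ∈ Set.Ioo 0 R) : 0 ≤ rzW ρ α R t := by
  have h1 := ht.1
  have h2 : 0 ≤ R^2 - t^2 := by nlinarith [ht.1, ht.2]
  unfold rzW; positivity

lemma wsq (ρ α R : ℝ) (hρ : -(1/2) < ρ) (hα : ρ + 1/2 < α) (hR : 0 < R) :
    Integrable (fun t => rzW ρ α R t ^ 2) (volume.restrict (Set.Ioo 0 R)) ∧
    ∫ t in Set.Ioo 0 R, rzW ρ α R t ^ 2 =
      ProbabilityTheory.beta (2*ρ+1/2+1) (2*α-1/2-(2*ρ+1/2)) / 2 * R^(2*(2*α-1/2)) := by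
  have hb := ProbabilityTheory.beta_pos (α := 2*ρ+1/2+1) (β := 2*α-1/2-(2*ρ+1/2))
    (by linarith) (by linarith)
  refine int_of_lint R _ _ ((rzW_meas ρ α R).pow_const 2) (by positivity) (fun _ _ => sq_nonneg _) ?_
  have hk := key (2*ρ+1/2) (2*α-1/2) R 0 (by linarith) (by linarith) hR le_rfl
  have h1 : ∀ β t : ℝ, rzK β t 0 = 1 := by intro β t; simp [rzK]
  simp only [h1, mul_one] at hk
  rw [← hk]
  refine setLIntegral_congr_fun measurableSet_Ioo (fun t ht => ?_)
  have h2 : 0 ≤ R^2 - t^2 := by nlinarith [ht.1, ht.2]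
  simp only [rzW]
  rw [mul_pow, ← Real.rpow_mul_natCast h2, ← Real.rpow_mul_natCast ht.1.le]
  congr 3 <;> push_cast <;> ring

lemma Ksq (ρ R : ℝ) (hρ : -(1/2) < ρ) (hR : 0 < R) :
    ∃ C : ENNReal, C ≠ ⊤ ∧ ∀ l, 0 ≤ l →
      ∫⁻ t in Set.Ioo 0 R, ENNReal.ofReal (rzK ρ t l ^ 2) ≤ C := by
  obtain ⟨σ, hσ1, hσ2, hσ3⟩ : ∃ σ : ℝ, -1 < σ ∧ σ ≤ -(1/2) ∧ σ ≤ 2 * ρ :=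
    ⟨min (-(1/2)) (2*ρ), lt_min (by norm_num) (by linarith), min_le_left _ _, min_le_right _ _⟩
  set B := ProbabilityTheory.beta (σ+1) (σ+1-σ) with hB
  have hBpos : 0 < B := ProbabilityTheory.beta_pos (by linarith) (by linarith)
  refine ⟨ENNReal.ofReal R + ENNReal.ofReal (R ^ (-(2*σ+1))) *
    ENNReal.ofReal (B / 2 * R^(2*(σ+1))), by finiteness, fun l hl => ?_⟩
  have hk := key σ (σ+1) R l hσ1 (by linarith) hR hl
  calc ∫⁻ t in Set.Ioo 0 R, ENNReal.ofReal (rzK ρ t l ^ 2)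
      ≤ ∫⁻ t in Set.Ioo 0 R, (1 + ENNReal.ofReal (R ^ (-(2*σ+1))) *
        ENNReal.ofReal ((R^2-t^2)^(σ+1-σ-1) * t^(2*σ+1) * rzK σ t l)) := by
        refine setLIntegral_mono' measurableSet_Ioo (fun t ht => ?_)
        have ht0 : 0 < t := ht.1
        have hk0 := rzK_nonneg σ t l
        have hz : σ + 1 - σ - 1 = 0 := by ring
        rw [hz, Real.rpow_zero, one_mul, ← ENNReal.ofReal_mul (by positivity),
          ← ENNReal.ofReal_one, ← ENNReal.ofReal_add zero_le_one (by positivity)]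
        refine ENNReal.ofReal_le_ofReal ?_
        have h1 : rzK ρ t l ^ 2 ≤ 1 + rzK σ t l := by
          have := rzK_nonneg σ t l
          unfold rzK at this ⊢
          split_ifs at this ⊢ with h
          · have hle : 1 - l / t^2 ≤ 1 := by
              have : 0 ≤ l / t ^ 2 := by positivity
              linarith
            rw [← Real.rpow_natCast, ← Real.rpow_mul h.le]
            have := Real.rpow_le_rpow_of_exponent_ge h hle (show σ ≤ ρ * (2:ℕ) by push_cast; linarith)
            linarith
          · norm_num
        have h2 : 1 ≤ R ^ (-(2*σ+1)) * t^(2*σ+1) := by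
          have := Real.rpow_le_rpow_of_nonpos ht0 ht.2.le (show 2*σ+1 ≤ 0 by linarith)
          rw [Real.rpow_neg hR.le, inv_mul_eq_div, le_div_iff₀ (by positivity)]
          linarith
        have := mul_le_mul_of_nonneg_right h2 hk0
        linarith
    _ = ENNReal.ofReal R + ENNReal.ofReal (R ^ (-(2*σ+1))) *
        ENNReal.ofReal (B / 2 * R^(2*(σ+1)) * rzK (σ+1) R l) := by
        rw [lintegral_add_left measurable_const, lintegral_const_mul' _ _ ENNReal.ofReal_ne_top, hk,
          setLIntegral_const, Real.volume_Ioo, one_mul, sub_zero]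
    _ ≤ _ := by
        have hq : 0 ≤ B / 2 * R^(2*(σ+1)) := by positivity
        refine add_le_add le_rfl (mul_le_mul_right (ENNReal.ofReal_le_ofReal ?_) _)
        exact mul_le_of_le_one_right hq
          (rzK_le_one _ _ _ (by linarith) hl)

lemma CS {μ : Measure ℝ} (h : ℝ → ENNReal) (hm : Measurable h) :
    (∫⁻ l, h l ∂μ) ^ 2 ≤ (∫⁻ l, h l ^ 2 ∂μ) * μ Set.univ := by
  have := ENNReal.lintegral_mul_le_Lp_mul_Lq μ Real.HolderConjugate.two_two hm.aemeasurable
    (g := fun _ => 1) aemeasurable_const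
  simp only [Pi.mul_apply, mul_one, ENNReal.one_rpow, lintegral_one, ENNReal.rpow_two] at this
  calc _ ≤ _ := pow_le_pow_left' this 2
    _ = _ := by
      rw [mul_pow, ← ENNReal.rpow_two, ← ENNReal.rpow_two, ← ENNReal.rpow_mul, ← ENNReal.rpow_mul]
      norm_num

lemma rm_eq (μ : Measure ℝ) (g : ℝ → ℂ) (β t : ℝ) :
    riesMean μ g β t = ∫ l, (rzK β t l : ℂ) * g l ∂μ := rfl

lemma rm_meas (μ : Measure ℝ) [IsFiniteMeasure μ] (g : ℝ → ℂ) (hg : Measurable g) (β : ℝ) :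
    StronglyMeasurable (fun t => riesMean μ g β t) := by
  simp only [rm_eq]
  refine StronglyMeasurable.integral_prod_right (f := fun t l => (rzK β t l : ℂ) * g l) ?_
  refine Measurable.stronglyMeasurable ?_
  exact (Complex.measurable_ofReal.comp (rzK_measurable β)).mul (hg.comp measurable_snd)

lemma rm_sq (μ : Measure ℝ) [IsFiniteMeasure μ] (hμ : ∀ᵐ l ∂μ, 0 ≤ l) (g : ℝ → ℂ)
    (hg : Measurable g) (M : ℝ) (hM : ∀ l, ‖g l‖ ≤ M) (ρ R : ℝ) (hρ : -(1/2) < ρ) (hR : 0 < R) :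
    Integrable (fun t => ‖riesMean μ g ρ t‖ ^ 2) (volume.restrict (Set.Ioo 0 R)) := by
  refine ⟨((rm_meas μ g hg ρ).norm.pow 2).aestronglyMeasurable, ?_⟩
  obtain ⟨C, hC, hCl⟩ := Ksq ρ R hρ hR
  have hmK : Measurable (fun p : ℝ × ℝ => ENNReal.ofReal (M^2) * ENNReal.ofReal (rzK ρ p.1 p.2 ^ 2)) :=
    (((rzK_measurable ρ).pow_const 2).ennreal_ofReal).const_mul _
  have hpt : ∀ t, ‖‖riesMean μ g ρ t‖ ^ 2‖ₑ ≤
      (∫⁻ l, ENNReal.ofReal (M^2) * ENNReal.ofReal (rzK ρ t l ^ 2) ∂μ) * μ Set.univ := by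
    intro t
    have hmt : Measurable fun l => (rzK ρ t l : ℂ) * g l :=
      (Complex.measurable_ofReal.comp ((rzK_measurable ρ).comp measurable_prodMk_left)).mul hg
    rw [enorm_pow, enorm_norm, rm_eq]
    refine (pow_le_pow_left' (enorm_integral_le_lintegral_enorm _) 2).trans ?_
    refine (CS _ hmt.enorm).trans ?_
    gcongr with l
    rw [← ENNReal.ofReal_mul (by positivity), ← ofReal_norm, ← ENNReal.ofReal_pow (norm_nonneg _)]
    refine ENNReal.ofReal_le_ofReal ?_
    rw [norm_mul, mul_pow, mul_comm, Complex.norm_real, Real.norm_eq_abs, sq_abs]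
    gcongr
    exact hM l
  calc _ ≤ ∫⁻ t in Set.Ioo 0 R,
      (∫⁻ l, ENNReal.ofReal (M^2) * ENNReal.ofReal (rzK ρ t l ^ 2) ∂μ) * μ Set.univ :=
        lintegral_mono hpt
    _ = (∫⁻ l, (∫⁻ t in Set.Ioo 0 R,
          ENNReal.ofReal (M^2) * ENNReal.ofReal (rzK ρ t l ^ 2)) ∂μ) * μ Set.univ := by
        rw [lintegral_mul_const' _ _ (measure_ne_top _ _), lintegral_lintegral_swap hmK.aemeasurable]
    _ ≤ (∫⁻ l, ENNReal.ofReal (M^2) * C ∂μ) * μ Set.univ := by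
        gcongr ?_ * _
        refine lintegral_mono_ae ?_
        filter_upwards [hμ] with l hl
        rw [lintegral_const_mul' _ _ ENNReal.ofReal_ne_top]
        gcongr
        exact hCl l hl
    _ < ⊤ := by
        rw [lintegral_const]; finiteness

lemma rm_repr (μ : Measure ℝ) [IsFiniteMeasure μ] (hμ : ∀ᵐ l ∂μ, 0 ≤ l) (g : ℝ → ℂ)
    (hg : Measurable g) (M : ℝ) (hM : ∀ l, ‖g l‖ ≤ M) (ρ α R : ℝ) (hρ : -(1/2) < ρ)
    (hα : ρ + 1/2 < α) (hR : 0 < R) :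
    ((ProbabilityTheory.beta (ρ+1) (α-ρ) / 2 * R^(2*α) : ℝ) : ℂ) * riesMean μ g α R
      = ∫ t in Set.Ioo 0 R, (rzW ρ α R t : ℂ) * riesMean μ g ρ t := by
  have hBpos : 0 < ProbabilityTheory.beta (ρ+1) (α-ρ) :=
    ProbabilityTheory.beta_pos (by linarith) (by linarith)
  set c := ProbabilityTheory.beta (ρ+1) (α-ρ) / 2 * R^(2*α) with hc
  have hc0 : 0 < c := by positivity
  have hk : ∀ l, 0 ≤ l → ∫⁻ t in Set.Ioo 0 R, ENNReal.ofReal (rzW ρ α R t * rzK ρ t l)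
      = ENNReal.ofReal (c * rzK α R l) := fun l hl => key ρ α R l (by linarith) (by linarith) hR hl
  have hk2 : ∀ l, 0 ≤ l → ∫ t in Set.Ioo 0 R, rzW ρ α R t * rzK ρ t l = c * rzK α R l := by
    intro l hl
    refine (int_of_lint R _ _ ?_ ?_ ?_ (hk l hl)).2
    · exact (rzW_meas ρ α R).mul ((rzK_measurable ρ).comp measurable_prodMk_right)
    · exact mul_nonneg hc0.le (rzK_nonneg _ _ _)
    · exact fun t ht => mul_nonneg (rzW_nonneg _ _ _ _ ht) (rzK_nonneg _ _ _)
  have hFm : Measurable (fun p : ℝ × ℝ => ((rzW ρ α R p.2 * rzK ρ p.2 p.1 : ℝ) : ℂ) * g p.1) :=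
    (Complex.measurable_ofReal.comp (((rzW_meas ρ α R).comp measurable_snd).mul
      ((rzK_measurable ρ).comp measurable_swap))).mul (hg.comp measurable_fst)
  have hint : Integrable (Function.uncurry fun l t : ℝ => ((rzW ρ α R t * rzK ρ t l : ℝ) : ℂ) * g l)
      (μ.prod (volume.restrict (Set.Ioo 0 R))) := by
    refine ⟨hFm.aestronglyMeasurable, ?_⟩
    unfold HasFiniteIntegral
    simp only [Function.uncurry_def]
    rw [lintegral_prod _ hFm.enorm.aemeasurable]
    calc _ ≤ ∫⁻ l, ENNReal.ofReal c * ENNReal.ofReal M ∂μ := by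
          refine lintegral_mono_ae ?_
          filter_upwards [hμ] with l hl
          calc _ ≤ ∫⁻ t in Set.Ioo 0 R, ENNReal.ofReal (rzW ρ α R t * rzK ρ t l) * ENNReal.ofReal M := by
                refine setLIntegral_mono' measurableSet_Ioo (fun t ht => ?_)
                have h0 := mul_nonneg (rzW_nonneg ρ α _ _ ht) (rzK_nonneg ρ t l)
                rw [← ofReal_norm, ← ENNReal.ofReal_mul h0]
                refine ENNReal.ofReal_le_ofReal ?_
                rw [norm_mul, Complex.norm_real, Real.norm_of_nonneg h0]
                exact mul_le_mul_of_nonneg_left (hM l) h0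
            _ = ENNReal.ofReal (c * rzK α R l) * ENNReal.ofReal M := by
                rw [lintegral_mul_const' _ _ ENNReal.ofReal_ne_top, hk l hl]
            _ ≤ _ := by
                gcongr
                exact mul_le_of_le_one_right hc0.le (rzK_le_one _ _ _ (by linarith) hl)
      _ < ⊤ := by rw [lintegral_const]; finiteness
  have hsw := integral_integral_swap hint
  have e1 : ∫ l, (∫ t in Set.Ioo 0 R, ((rzW ρ α R t * rzK ρ t l : ℝ) : ℂ) * g l) ∂μ
      = (c : ℂ) * riesMean μ g α R := by
    rw [rm_eq, ← integral_const_mul]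
    refine integral_congr_ae ?_
    filter_upwards [hμ] with l hl
    rw [integral_mul_const, integral_complex_ofReal, hk2 l hl]
    push_cast; ring
  rw [← e1, hsw]
  congr 1
  ext t
  rw [rm_eq, ← integral_const_mul]
  congr 1
  ext l
  push_cast; ring

theorem stein_wainger_scalar (ρ α : ℝ) (hρ : -(1 / 2) < ρ) (hα : ρ + 1 / 2 < α) :
    ∃ C : ℝ, 0 < C ∧ ∀ μ : Measure ℝ, IsFiniteMeasure μ → μ (Set.Iio 0) = 0 →
      ∀ g : ℝ → ℂ, Measurable g → (∃ M : ℝ, ∀ l : ℝ, ‖g l‖ ≤ M) →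
      ∀ R : ℝ, 0 < R →
        ‖riesMean μ g α R‖ ^ 2
          ≤ C * (1 / R) * ∫ t in (0 : ℝ)..R, ‖riesMean μ g ρ t‖ ^ 2 := by
  have hb1 := ProbabilityTheory.beta_pos (α := ρ+1) (β := α-ρ) (by linarith) (by linarith)
  have hb2 := ProbabilityTheory.beta_pos (α := 2*ρ+1/2+1) (β := 2*α-1/2-(2*ρ+1/2))
    (by linarith) (by linarith)
  refine ⟨(ProbabilityTheory.beta (2*ρ+1/2+1) (2*α-1/2-(2*ρ+1/2)) / 2) /
    (ProbabilityTheory.beta (ρ+1) (α-ρ) / 2) ^ 2, by positivity, ?_⟩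
  intro μ hfin hμ0 g hg ⟨M, hM⟩ R hR
  have hμ : ∀ᵐ l ∂μ, 0 ≤ l := by
    rw [ae_iff]; simpa [Set.Iio] using hμ0
  have hrep := rm_repr μ hμ g hg M hM ρ α R hρ hα hR
  have hs := rm_sq μ hμ g hg M hM ρ R hρ hR
  obtain ⟨hw, hw2⟩ := wsq ρ α R hρ hα hR
  rw [intervalIntegral.integral_of_le hR.le, integral_Ioc_eq_integral_Ioo]
  set b1 := ProbabilityTheory.beta (ρ+1) (α-ρ)
  set b2 := ProbabilityTheory.beta (2*ρ+1/2+1) (2*α-1/2-(2*ρ+1/2))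
  set S := ∫ t in Set.Ioo 0 R, ‖riesMean μ g ρ t‖ ^ 2 with hS
  have hS0 : 0 ≤ S := integral_nonneg fun t => sq_nonneg _
  have hw0 : 0 ≤ᵐ[volume.restrict (Set.Ioo 0 R)] rzW ρ α R :=
    (ae_restrict_iff' measurableSet_Ioo).2 (Filter.Eventually.of_forall (rzW_nonneg ρ α R))
  have hH := integral_mul_le_Lp_mul_Lq_of_nonneg (μ := volume.restrict (Set.Ioo 0 R))
    Real.HolderConjugate.two_two hw0
    (g := fun t => ‖riesMean μ g ρ t‖) (Filter.Eventually.of_forall fun t => norm_nonneg _)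
    (by simpa using (memLp_two_iff_integrable_sq (rzW_meas ρ α R).aestronglyMeasurable).2 hw)
    (by simpa using (memLp_two_iff_integrable_sq (rm_meas μ g hg ρ).norm.aestronglyMeasurable).2 hs)
  simp only [Real.rpow_two] at hH
  rw [hw2, ← hS, ← Real.sqrt_eq_rpow, ← Real.sqrt_eq_rpow] at hH
  have h1 : b1 / 2 * R^(2*α) * ‖riesMean μ g α R‖ ≤ √(b2 / 2 * R^(2*(2*α-1/2))) * √S := by
    refine le_trans ?_ hH
    have := congrArg norm hrep
    rw [norm_mul, Complex.norm_real, Real.norm_of_nonneg (by positivity)] at this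
    rw [this]
    refine (norm_integral_le_integral_norm _).trans (le_of_eq (integral_congr_ae ?_))
    filter_upwards [hw0] with t ht
    rw [norm_mul, Complex.norm_real, Real.norm_of_nonneg ht]
  have h2 := pow_le_pow_left₀ (by positivity) h1 2
  rw [mul_pow, mul_pow √_, Real.sq_sqrt (by positivity), Real.sq_sqrt hS0] at h2
  have e : (R^(2*α))^2 = R^(2*(2*α-1/2)) * R := by
    rw [← Real.rpow_natCast, ← Real.rpow_mul hR.le, ← Real.rpow_add_one hR.ne']
    congr 1; push_cast; ring
  rw [mul_pow, e] at h2
  have hP := Real.rpow_pos_of_pos hR (2*(2*α-1/2))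
  generalize R^(2*(2*α-1/2)) = P at *
  have h3 : P * ((b1/2)^2 * R * ‖riesMean μ g α R‖^2) ≤ P * (b2 / 2 * S) := by linarith
  have h4 := le_of_mul_le_mul_left h3 hP
  have : b2 / 2 / (b1/2)^2 * (1/R) * S = (b2 / 2 * S) / ((b1/2)^2 * R) := by field_simp
  rw [this, le_div_iff₀ (by positivity)]
  linarith
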